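/- arXiv:1701.04846 — 2 statements merged into one kernel-verified Lean document; each statement's English description precedes it below -/
import Mathlib

section
/- Let n ≥ 1 and let f : [0,2π] → (0,∞) satisfy f(2π−λ) = f(λ) for all λ ∈ [0,2π]. Then for every z ∈ ℝ^n the identity det(D_n(f))^{−1/2} exp(−(1/2)(F_n z)^T D_n(f)^{−1} (F_n z)) = (2π)^{−n/2} exp(−(1/2) Σ_{j=0}^{n−1} (log f(λ_j) + I_{n,λ_j}(z)/f(λ_j))) holds; i.e. the Gaussian density with covariance F_n^T D_n(f) F_n evaluated at z equals the Whittle likelihood in the time domain. -/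
open MeasureTheory Matrix Filter

/-- The `j`-th Fourier frequency `λ_j = 2πj/n`. -/
noncomputable def fourierFreq (n j : ℕ) : ℝ := 2 * Real.pi * j / n

/-- The periodogram `I_{n,λ}(z) = (2πn)⁻¹ |∑_{t=1}^n z_t e^{-itλ}|²`. -/
noncomputable def periodogram (n : ℕ) (lam : ℝ) (z : Fin n → ℝ) : ℝ :=
  1 / (2 * Real.pi * n) *
    Complex.normSq (∑ t : Fin n, (z t : ℂ) *
      Complex.exp (-Complex.I * (((t : ℕ) + 1 : ℕ) : ℂ) * (lam : ℂ)))

/-- The real orthogonal Fourier transform matrix `F_n` with rows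
`e_0, c_1, s_1, …, c_N, s_N` (and additionally `e_{n/2}` as last row for `n` even). -/
noncomputable def Fmat (n : ℕ) : Matrix (Fin n) (Fin n) ℝ :=
  Matrix.of fun r t : Fin n =>
    if r.val = 0 then 1 / Real.sqrt n
    else if n % 2 = 0 ∧ r.val = n - 1 then (-1 : ℝ) ^ ((t : ℕ) + 1) / Real.sqrt n
    else if r.val % 2 = 1 then
      Real.sqrt 2 / Real.sqrt n *
        Real.cos (2 * Real.pi * (((r.val + 1) / 2 : ℕ) : ℝ) * (((t : ℕ) + 1 : ℕ) : ℝ) / n)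
    else
      -(Real.sqrt 2 / Real.sqrt n) *
        Real.sin (2 * Real.pi * ((r.val / 2 : ℕ) : ℝ) * (((t : ℕ) + 1 : ℕ) : ℝ) / n)

/-- The diagonal matrix `D_n(f)` with entries `2πf(λ_0), 2πf(λ_1), 2πf(λ_1), …`
matching the row ordering of `F_n`. -/
noncomputable def Dmat (n : ℕ) (f : ℝ → ℝ) : Matrix (Fin n) (Fin n) ℝ :=
  Matrix.diagonal fun r : Fin n => 2 * Real.pi * f (fourierFreq n ((r.val + 1) / 2))

/-- The diagonal correction matrix `C_n(f, f_param)` with entries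
`c(λ_0), c(λ_1), c(λ_1), …` where `c = f/f_param`, matching the row ordering of `F_n`. -/
noncomputable def Cmat (n : ℕ) (f fp : ℝ → ℝ) : Matrix (Fin n) (Fin n) ℝ :=
  Matrix.diagonal fun r : Fin n =>
    f (fourierFreq n ((r.val + 1) / 2)) / fp (fourierFreq n ((r.val + 1) / 2))

/-- Entrywise real power of the diagonal of a matrix: for a diagonal matrix `A` with
positive entries, `diagRPow n A (-(1/2))` is `A^{-1/2}` etc. -/
noncomputable def diagRPow (n : ℕ) (A : Matrix (Fin n) (Fin n) ℝ) (p : ℝ) :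
    Matrix (Fin n) (Fin n) ℝ :=
  Matrix.diagonal fun i => A i i ^ p

/-!
Up to the factor `√(2/n)` (or `1/√n` at the self-conjugate frequencies `0` and `π`), the rows of
`F_n` compute the real and imaginary parts of the Fourier sum `∑ z_t e^{-itλ}`. Hence the squares
of the two coordinates of `F_n z` belonging to `λ_k` add up to `4π I_{n,λ_k}(z)`, which is
`2π (I_{n,λ_k}(z) + I_{n,λ_{n-k}}(z))` because `z` is real. Since `f(λ_{n-k}) = f(λ_k)`, both the
determinant and the quadratic form of `D_n(f)` unfold into sums over all Fourier frequencies.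
-/

section Sums

variable {M : Type*} [AddCommMonoid M]

lemma sum_range_succ_div_two_of_reflect {n : ℕ} {G : ℕ → M}
    (hG : ∀ k ∈ Set.Ioo 0 n, G (n - k) = G k) :
    ∑ r ∈ Finset.range n, G ((r + 1) / 2) = ∑ j ∈ Finset.range n, G j := by
  -- The permutation lists the frequencies as `0, 1, n - 1, 2, n - 2, …`.
  refine Finset.sum_nbij' (fun r => if 0 < r ∧ r % 2 = 0 then n - r / 2 else (r + 1) / 2)
    (fun j => if 2 * j ≤ n then 2 * j - 1 else 2 * (n - j)) ?_ ?_ ?_ ?_ ?_ <;>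
    simp only [Finset.mem_range]
  · grind
  · grind
  · grind
  · grind
  · intro r hr
    split_ifs with h
    · rw [hG (r / 2) ⟨by omega, by omega⟩, show (r + 1) / 2 = r / 2 by omega]
    · rfl

lemma sum_fin_odd_congr_of_pairs {m : ℕ} {A B : Fin (2 * m + 1) → M} (zero : A 0 = B 0)
    (pair : ∀ k (hk : 2 * k + 2 < 2 * m + 1), A ⟨2 * k + 1, by omega⟩ + A ⟨2 * k + 2, hk⟩ =
      B ⟨2 * k + 1, by omega⟩ + B ⟨2 * k + 2, hk⟩) :
    ∑ r, A r = ∑ r, B r := by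
  induction m with
  | zero => simpa using zero
  | succ m ih =>
    have lower : ∑ r : Fin (2 * m + 1), A r.castSucc.castSucc =
        ∑ r : Fin (2 * m + 1), B r.castSucc.castSucc :=
      ih zero fun k hk => pair k (by omega)
    change ∑ r : Fin (2 * m + 1 + 1 + 1), A r = ∑ r : Fin (2 * m + 1 + 1 + 1), B r
    simp only [Fin.sum_univ_castSucc (n := 2 * m + 1 + 1), Fin.sum_univ_castSucc (n := 2 * m + 1),
      add_assoc, lower]
    exact congrArg _ (pair m (by omega))

lemma sum_fin_congr_of_pairs {n : ℕ} {A B : Fin n → M}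
    (zero : ∀ hn : 0 < n, A ⟨0, hn⟩ = B ⟨0, hn⟩)
    (pair : ∀ k (hk : 2 * k + 2 < n), A ⟨2 * k + 1, by omega⟩ + A ⟨2 * k + 2, hk⟩ =
      B ⟨2 * k + 1, by omega⟩ + B ⟨2 * k + 2, hk⟩)
    (last : ∀ k (hk : n = 2 * k + 2), A ⟨2 * k + 1, by omega⟩ = B ⟨2 * k + 1, by omega⟩) :
    ∑ r, A r = ∑ r, B r := by
  rcases n with _ | n
  · simp only [Finset.univ_eq_empty, Finset.sum_empty]
  obtain ⟨m, rfl | rfl⟩ := n.even_or_odd'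
  · exact sum_fin_odd_congr_of_pairs (zero (by omega)) pair
  · have front : ∑ r : Fin (2 * m + 1), A r.castSucc = ∑ r : Fin (2 * m + 1), B r.castSucc :=
      sum_fin_odd_congr_of_pairs (zero (by omega)) fun k hk => pair k (by omega)
    rw [Fin.sum_univ_castSucc A, Fin.sum_univ_castSucc B, front]
    exact congrArg _ (last m rfl)

end Sums

section Diagonal

variable {ι : Type*} [Fintype ι] [DecidableEq ι]

lemma dotProduct_inv_diagonal_mulVec {K : Type*} [Field K] {d : ι → K} (hd : ∀ i, d i ≠ 0)
    (v : ι → K) : v ⬝ᵥ (diagonal d)⁻¹ *ᵥ v = ∑ i, v i ^ 2 / d i := by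
  have inv_eq : (diagonal d)⁻¹ = diagonal fun i => (d i)⁻¹ := by
    refine inv_eq_right_inv ?_
    simp only [diagonal_mul_diagonal, mul_inv_cancel₀ (hd _), diagonal_one]
  refine inv_eq ▸ Finset.sum_congr rfl fun i _ => ?_
  rw [mulVec_diagonal]
  ring

lemma det_diagonal_const_mul_rpow {c : ℝ} (hc : 0 < c) {d : ι → ℝ} (hd : ∀ i, 0 < d i) (p : ℝ) :
    (diagonal fun i => c * d i).det ^ p =
      c ^ (Fintype.card ι * p) * Real.exp (p * ∑ i, Real.log (d i)) := by
  have hprod : 0 < ∏ i, d i := Finset.prod_pos fun i _ => hd i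
  rw [det_diagonal, Finset.prod_mul_distrib, Finset.prod_const, Finset.card_univ,
    Real.mul_rpow (by positivity) hprod.le, Real.rpow_natCast_mul hc.le,
    Real.rpow_def_of_pos hprod, Real.log_prod fun i _ => (hd i).ne', mul_comm p]

end Diagonal

section FourierFreq

variable {n k : ℕ}

lemma fourierFreq_zero (n : ℕ) : fourierFreq n 0 = 0 := by simp [fourierFreq]

lemma fourierFreq_two_mul_self (hk : k ≠ 0) : fourierFreq (2 * k) k = Real.pi := by
  unfold fourierFreq
  push_cast
  field_simp

lemma fourierFreq_sub (hn : n ≠ 0) (hk : k ≤ n) :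
    fourierFreq n (n - k) = 2 * Real.pi - fourierFreq n k := by
  unfold fourierFreq
  rw [Nat.cast_sub hk]
  field_simp

lemma fourierFreq_mem_Icc (hk : k ≤ n) : fourierFreq n k ∈ Set.Icc 0 (2 * Real.pi) := by
  unfold fourierFreq
  refine ⟨by positivity, div_le_of_le_mul₀ (by positivity) (by positivity) ?_⟩
  gcongr

end FourierFreq

/-- The unnormalised Fourier transform `∑_{t=1}^n z_t e^{-itλ}` of `z`, whose squared modulus
defines the periodogram. -/
noncomputable def fourierSum {n : ℕ} (z : Fin n → ℝ) (lam : ℝ) : ℂ :=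
  ∑ t : Fin n, (z t : ℂ) * Complex.exp (-Complex.I * (((t : ℕ) + 1 : ℕ) : ℂ) * (lam : ℂ))

section FourierSum

variable {n : ℕ} (z : Fin n → ℝ) (lam : ℝ)

lemma exp_neg_I_mul_natCast_mul (m : ℕ) (x : ℝ) :
    Complex.exp (-Complex.I * m * x) = ⟨Real.cos (m * x), -Real.sin (m * x)⟩ := by
  rw [show -Complex.I * m * x = ((-(m * x) : ℝ) : ℂ) * Complex.I by push_cast; ring]
  apply Complex.ext
  · rw [Complex.exp_ofReal_mul_I_re, Real.cos_neg]
  · rw [Complex.exp_ofReal_mul_I_im, Real.sin_neg]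

lemma re_fourierSum :
    (fourierSum z lam).re = ∑ t : Fin n, z t * Real.cos (((t : ℕ) + 1 : ℕ) * lam) := by
  simp only [fourierSum, exp_neg_I_mul_natCast_mul, Complex.re_sum, Complex.re_ofReal_mul]

lemma im_fourierSum :
    (fourierSum z lam).im = -∑ t : Fin n, z t * Real.sin (((t : ℕ) + 1 : ℕ) * lam) := by
  simp only [fourierSum, exp_neg_I_mul_natCast_mul, Complex.im_sum, Complex.im_ofReal_mul,
    mul_neg, Finset.sum_neg_distrib]

lemma im_fourierSum_zero : (fourierSum z 0).im = 0 := by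
  simp [im_fourierSum]

lemma im_fourierSum_pi : (fourierSum z Real.pi).im = 0 := by
  simp only [im_fourierSum, Real.sin_nat_mul_pi, mul_zero, Finset.sum_const_zero, neg_zero]

lemma fourierSum_two_pi_sub :
    fourierSum z (2 * Real.pi - lam) = star (fourierSum z lam) := by
  apply Complex.ext
  · simp only [Complex.star_def, Complex.conj_re, re_fourierSum, mul_sub,
      Real.cos_nat_mul_two_pi_sub]
  · simp only [Complex.star_def, Complex.conj_im, im_fourierSum, mul_sub,
      Real.sin_nat_mul_two_pi_sub, mul_neg, Finset.sum_neg_distrib]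

lemma periodogram_two_pi_sub :
    periodogram n (2 * Real.pi - lam) z = periodogram n lam z := by
  change _ * Complex.normSq (fourierSum z _) = _ * Complex.normSq (fourierSum z _)
  rw [fourierSum_two_pi_sub, Complex.star_def, Complex.normSq_conj]

lemma two_pi_mul_periodogram :
    2 * Real.pi * periodogram n lam z =
      ((fourierSum z lam).re ^ 2 + (fourierSum z lam).im ^ 2) / n := by
  change _ * (_ * Complex.normSq (fourierSum z lam)) = _
  rw [Complex.normSq_apply]
  field_simp

end FourierSum

section Fmat

variable {n k : ℕ} (z : Fin n → ℝ)

lemma Fmat_mulVec_zero (hn : 0 < n) :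
    (Fmat n *ᵥ z) ⟨0, hn⟩ = (fourierSum z 0).re / √n := by
  simp only [mulVec, dotProduct, Fmat, of_apply, if_true, re_fourierSum, mul_zero, Real.cos_zero,
    Finset.sum_div]
  exact Finset.sum_congr rfl fun t _ => by ring

lemma Fmat_mulVec_last (hk : n = 2 * k + 2) :
    (Fmat n *ᵥ z) ⟨2 * k + 1, by omega⟩ = (fourierSum z Real.pi).re / √n := by
  simp only [mulVec, dotProduct, Fmat, of_apply, re_fourierSum, Real.cos_nat_mul_pi,
    Finset.sum_div]
  refine Finset.sum_congr rfl fun t _ => ?_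
  rw [if_neg (by omega), if_pos (by omega)]
  ring

lemma Fmat_mulVec_cos (hk : 2 * k + 2 < n) :
    (Fmat n *ᵥ z) ⟨2 * k + 1, by omega⟩ =
      √2 / √n * (fourierSum z (fourierFreq n (k + 1))).re := by
  simp only [mulVec, dotProduct, Fmat, of_apply, re_fourierSum, fourierFreq, Finset.mul_sum]
  refine Finset.sum_congr rfl fun t _ => ?_
  rw [if_neg (by omega), if_neg (by omega), if_pos (by omega),
    show (2 * k + 1 + 1) / 2 = k + 1 by omega]
  ring_nf

lemma Fmat_mulVec_sin (hk : 2 * k + 2 < n) :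
    (Fmat n *ᵥ z) ⟨2 * k + 2, hk⟩ =
      √2 / √n * (fourierSum z (fourierFreq n (k + 1))).im := by
  simp only [mulVec, dotProduct, Fmat, of_apply, im_fourierSum, fourierFreq, mul_neg,
    Finset.mul_sum, ← Finset.sum_neg_distrib]
  refine Finset.sum_congr rfl fun t _ => ?_
  rw [if_neg (by omega), if_neg (by omega), if_neg (by omega),
    show (2 * k + 2) / 2 = k + 1 by omega]
  ring_nf

lemma Fmat_mulVec_zero_sq (hn : 0 < n) :
    (Fmat n *ᵥ z) ⟨0, hn⟩ ^ 2 = 2 * Real.pi * periodogram n (fourierFreq n 0) z := by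
  rw [Fmat_mulVec_zero, two_pi_mul_periodogram, fourierFreq_zero, im_fourierSum_zero, div_pow,
    Real.sq_sqrt n.cast_nonneg]
  ring

lemma Fmat_mulVec_last_sq (hk : n = 2 * k + 2) :
    (Fmat n *ᵥ z) ⟨2 * k + 1, by omega⟩ ^ 2 =
      2 * Real.pi * periodogram n (fourierFreq n (k + 1)) z := by
  have nyquist : fourierFreq n (k + 1) = Real.pi :=
    hk ▸ fourierFreq_two_mul_self k.succ_ne_zero
  rw [Fmat_mulVec_last z hk, two_pi_mul_periodogram, nyquist, im_fourierSum_pi, div_pow,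
    Real.sq_sqrt n.cast_nonneg]
  ring

lemma Fmat_mulVec_cos_sq_add_sin_sq (hk : 2 * k + 2 < n) :
    (Fmat n *ᵥ z) ⟨2 * k + 1, by omega⟩ ^ 2 + (Fmat n *ᵥ z) ⟨2 * k + 2, hk⟩ ^ 2 =
      2 * (2 * Real.pi * periodogram n (fourierFreq n (k + 1)) z) := by
  rw [Fmat_mulVec_cos z hk, Fmat_mulVec_sin z hk, two_pi_mul_periodogram, mul_pow, mul_pow,
    div_pow, Real.sq_sqrt zero_le_two, Real.sq_sqrt n.cast_nonneg]
  ring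

lemma sum_Fmat_mulVec_sq_mul (w : ℕ → ℝ) :
    ∑ r : Fin n, (Fmat n *ᵥ z) r ^ 2 * w ((r + 1) / 2) =
      ∑ r : Fin n, 2 * Real.pi * periodogram n (fourierFreq n ((r + 1) / 2)) z *
        w ((r + 1) / 2) := by
  refine sum_fin_congr_of_pairs (fun hn => ?_) (fun k hk => ?_) (fun k hk => ?_)
  · simp only [Fmat_mulVec_zero_sq, zero_add, Nat.reduceDiv]
  · dsimp only
    rw [show (2 * k + 1 + 1) / 2 = k + 1 by omega, show (2 * k + 2 + 1) / 2 = k + 1 by omega,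
      ← add_mul, Fmat_mulVec_cos_sq_add_sin_sq]
    ring
  · dsimp only
    rw [show (2 * k + 1 + 1) / 2 = k + 1 by omega, Fmat_mulVec_last_sq z hk]

lemma sum_Fmat_mulVec_sq_mul_of_reflect {w : ℕ → ℝ} (hw : ∀ k ∈ Set.Ioo 0 n, w (n - k) = w k) :
    ∑ r : Fin n, (Fmat n *ᵥ z) r ^ 2 * w ((r + 1) / 2) =
      ∑ j : Fin n, 2 * Real.pi * periodogram n (fourierFreq n j) z * w j := by
  let G (j : ℕ) : ℝ := 2 * Real.pi * periodogram n (fourierFreq n j) z * w j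
  have hG : ∀ k ∈ Set.Ioo 0 n, G (n - k) = G k := by
    intro k hk
    simp only [G]
    rw [fourierFreq_sub (hk.1.trans hk.2).ne' hk.2.le, periodogram_two_pi_sub, hw k hk]
  rw [sum_Fmat_mulVec_sq_mul, ← Finset.sum_range fun r => G ((r + 1) / 2),
    ← Finset.sum_range G, sum_range_succ_div_two_of_reflect hG]

end Fmat

section Whittle

variable {n : ℕ} {f : ℝ → ℝ}

lemma Dmat_det_rpow (hpos : ∀ j < n, 0 < f (fourierFreq n j))
    (hrefl : ∀ k ∈ Set.Ioo 0 n, f (fourierFreq n (n - k)) = f (fourierFreq n k)) (p : ℝ) :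
    (Dmat n f).det ^ p = (2 * Real.pi) ^ (n * p) *
      Real.exp (p * ∑ j : Fin n, Real.log (f (fourierFreq n j))) := by
  rw [Dmat, det_diagonal_const_mul_rpow Real.two_pi_pos fun r => hpos _ (by omega),
    Fintype.card_fin, ← Finset.sum_range fun r => Real.log (f (fourierFreq n ((r + 1) / 2))),
    ← Finset.sum_range fun j => Real.log (f (fourierFreq n j)),
    sum_range_succ_div_two_of_reflect (G := fun j => Real.log (f (fourierFreq n j)))
      fun k hk => congrArg Real.log (hrefl k hk)]

lemma Fmat_mulVec_dotProduct_Dmat_inv_mulVec (hne : ∀ j < n, f (fourierFreq n j) ≠ 0)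
    (hrefl : ∀ k ∈ Set.Ioo 0 n, f (fourierFreq n (n - k)) = f (fourierFreq n k))
    (z : Fin n → ℝ) :
    Fmat n *ᵥ z ⬝ᵥ (Dmat n f)⁻¹ *ᵥ (Fmat n *ᵥ z) =
      ∑ j : Fin n, periodogram n (fourierFreq n j) z / f (fourierFreq n j) := by
  let w (j : ℕ) : ℝ := (2 * Real.pi * f (fourierFreq n j))⁻¹
  have hw : ∀ k ∈ Set.Ioo 0 n, w (n - k) = w k := fun k hk => by
    simp only [w, hrefl k hk]
  calc Fmat n *ᵥ z ⬝ᵥ (Dmat n f)⁻¹ *ᵥ (Fmat n *ᵥ z)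
      = ∑ r : Fin n, (Fmat n *ᵥ z) r ^ 2 * w ((r + 1) / 2) :=
        dotProduct_inv_diagonal_mulVec
          (fun r => mul_ne_zero Real.two_pi_pos.ne' (hne _ (by omega))) _
    _ = ∑ j : Fin n, 2 * Real.pi * periodogram n (fourierFreq n j) z * w j :=
        sum_Fmat_mulVec_sq_mul_of_reflect z hw
    _ = ∑ j : Fin n, periodogram n (fourierFreq n j) z / f (fourierFreq n j) :=
        Finset.sum_congr rfl fun j _ => mul_div_mul_left _ _ Real.two_pi_pos.ne'

end Whittle

/-- the Gaussian density with covariance `F_nᵀ D_n(f) F_n` evaluated at `z`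
equals the Whittle likelihood in the time domain. -/
theorem statement2 (n : ℕ) (hn : 1 ≤ n) (f : ℝ → ℝ)
    (hf : ∀ x ∈ Set.Icc 0 (2 * Real.pi), 0 < f x)
    (hsym : ∀ x ∈ Set.Icc 0 (2 * Real.pi), f (2 * Real.pi - x) = f x)
    (z : Fin n → ℝ) :
    (Dmat n f).det ^ (-(1 : ℝ) / 2) *
      Real.exp (-(1 / 2) *
        ((Fmat n).mulVec z ⬝ᵥ ((Dmat n f)⁻¹).mulVec ((Fmat n).mulVec z))) =
    (2 * Real.pi) ^ (-(n : ℝ) / 2) *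
      Real.exp (-(1 / 2) * ∑ j : Fin n,
        (Real.log (f (fourierFreq n j.val)) +
          periodogram n (fourierFreq n j.val) z / f (fourierFreq n j.val))) := by
  have hpos : ∀ j < n, 0 < f (fourierFreq n j) := fun j hj => hf _ (fourierFreq_mem_Icc hj.le)
  have hrefl : ∀ k ∈ Set.Ioo 0 n, f (fourierFreq n (n - k)) = f (fourierFreq n k) := by
    intro k hk
    rw [fourierFreq_sub (by omega) hk.2.le, hsym _ (fourierFreq_mem_Icc hk.2.le)]
  rw [Dmat_det_rpow hpos hrefl,
    Fmat_mulVec_dotProduct_Dmat_inv_mulVec (fun j hj => (hpos j hj).ne') hrefl,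
    mul_assoc, ← Real.exp_add, Finset.sum_add_distrib]
  ring_nf
end

section
/- Let n ≥ 1, let F be an n×n real orthogonal matrix, let C and D be n×n diagonal matrices with positive diagonal entries, let Σ be an n×n symmetric positive definite matrix, and set D_param := C^{−1}D. Let W = (W_1, …, W_n) be distributed according to the n-fold product of standard normal distributions, and set Z := F^T D^{1/2} W. Define B(z) := z^T F^T D^{−1} F z − z^T F^T C^{−1/2} F Σ^{−1} F^T C^{−1/2} F z. Then Var[B(Z)] = 2 tr((I_n − F Σ^{−1} F^T D_param)²). -/
open MeasureTheory ProbabilityTheory Matrix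

/-!
A real symmetric operator `T` has an orthonormal eigenbasis, and the standard Gaussian law has
independent `N(0,1)` coordinates in every orthonormal basis. Hence `⟪x, T x⟫` is distributed as
`∑ i, lᵢ wᵢ²` with independent summands, where the `lᵢ` are the eigenvalues of `T`, and
`Var[wᵢ²] = 3 - 1 = 2` gives the variance `2 tr(T²)`.

Since `F Fᵀ = 1`, substituting `z = Fᵀ D^{1/2} w` turns `B` into the quadratic form of
`1 - E M E` with `M = F Σ⁻¹ Fᵀ` and `E = C^{-1/2} D^{1/2}`. The traces of powers of `E (M E)` and
`M E² = M C⁻¹ D` agree, which turns the symmetric matrix `1 - E M E` into the one of the theorem.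
-/

open scoped ENNReal NNReal RealInnerProductSpace

lemma memLp_inner_apply_of_isGaussian {E : Type*} [NormedAddCommGroup E] [InnerProductSpace ℝ E]
    [MeasurableSpace E] [BorelSpace E] [SecondCountableTopology E] [CompleteSpace E]
    (μ : Measure E) [IsGaussian μ] (T : E →L[ℝ] E) {p : ℝ≥0∞} (hp : p ≠ ∞) :
    MemLp (fun x ↦ ⟪x, T x⟫) p μ := by
  have hid : MemLp id (2 * p) μ := IsGaussian.memLp_id μ (2 * p) (ENNReal.mul_ne_top (by simp) hp)
  have : ENNReal.HolderTriple (2 * p) (2 * p) p := ⟨by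
    rw [ENNReal.mul_inv (by simp) (by simp), ← add_mul, ENNReal.inv_two_add_inv_two, one_mul]⟩
  exact (innerSL ℝ).memLp_of_bilin p hid (T.comp_memLp' hid)

lemma integral_pow_add_two_gaussianReal (v : ℝ≥0) (k : ℕ) :
    ∫ x, x ^ (k + 2) ∂gaussianReal 0 v = (k + 1) * v * ∫ x, x ^ k ∂gaussianReal 0 v := by
  let M : ℝ → ℝ := mgf (fun x ↦ x) (gaussianReal 0 v)
  have hM_exp : M = fun t ↦ Real.exp (v * t ^ 2 / 2) := by
    ext t
    simp [M, mgf_fun_id_gaussianReal]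
  have hM_smooth : ContDiffAt ℝ (k + 1 : ℕ) (fun t ↦ v * M t) 0 := by
    rw [hM_exp]
    fun_prop
  have hM_deriv : deriv M = fun t ↦ t * (v * M t) := by
    ext t
    have hexponent : HasDerivAt (fun t : ℝ ↦ v * t ^ 2 / 2) (v * t) t :=
      (((hasDerivAt_pow 2 t).const_mul (v : ℝ)).div_const 2).congr_deriv (by norm_num; ring)
    simp only [hM_exp, hexponent.exp.deriv]
    ring
  have hmoment (m : ℕ) : ∫ x, x ^ m ∂gaussianReal 0 v = iteratedDeriv m M 0 :=
    (iteratedDeriv_mgf_zero (by simp) m).symm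
  have hleibniz : iteratedDeriv (k + 1) (fun t ↦ t * (v * M t)) 0 =
      (k + 1) * iteratedDeriv k (fun t ↦ v * M t) 0 := by
    rw [iteratedDeriv_fun_mul contDiffAt_fun_id hM_smooth]
    simp [iteratedDeriv_fun_id_zero]
  rw [hmoment, hmoment, iteratedDeriv_succ', hM_deriv, hleibniz, iteratedDeriv_const_mul_field,
    mul_assoc]

lemma memLp_sq_gaussianReal (μ : ℝ) (v : ℝ≥0) {p : ℝ≥0∞} (hp : p ≠ ∞) :
    MemLp (fun x : ℝ ↦ x ^ 2) p (gaussianReal μ v) := by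
  simpa [sq] using memLp_inner_apply_of_isGaussian (gaussianReal μ v) (.id ℝ ℝ) hp

lemma variance_sq_gaussianReal (v : ℝ≥0) :
    Var[fun x : ℝ ↦ x ^ 2; gaussianReal 0 v] = 2 * (v : ℝ) ^ 2 := by
  have hsecond : ∫ x, x ^ 2 ∂gaussianReal 0 v = v := by
    simpa using integral_pow_add_two_gaussianReal v 0
  have hfourth : ∫ x, x ^ 4 ∂gaussianReal 0 v = 3 * (v : ℝ) ^ 2 := by
    rw [integral_pow_add_two_gaussianReal v 2, hsecond]
    push_cast
    ring
  rw [variance_eq_sub (memLp_sq_gaussianReal 0 v (by simp)), hsecond]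
  simp only [Pi.pow_apply, ← pow_mul, Nat.reduceMul, hfourth]
  ring

lemma variance_sum_mul_sq_pi_gaussianReal {ι : Type*} [Fintype ι] (l : ι → ℝ) (v : ι → ℝ≥0) :
    Var[fun w : ι → ℝ ↦ ∑ i, l i * w i ^ 2; Measure.pi fun i ↦ gaussianReal 0 (v i)] =
      2 * ∑ i, (l i * v i) ^ 2 := by
  have hsum := variance_sum_pi (X := fun i x ↦ l i * x ^ 2)
    fun i ↦ (memLp_sq_gaussianReal 0 (v i) (by simp)).const_mul (l i)
  simp only [variance_const_mul, variance_sq_gaussianReal] at hsum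
  have hfun : (fun w : ι → ℝ ↦ ∑ i, l i * w i ^ 2) = ∑ i, fun w ↦ l i * w i ^ 2 := by
    ext w
    simp
  rw [hfun, hsum, Finset.mul_sum]
  exact Finset.sum_congr rfl fun i _ ↦ by ring

section InnerProductSpace

variable {E : Type*} [NormedAddCommGroup E] [InnerProductSpace ℝ E]

section Eigenbasis

variable {ι : Type*} [Fintype ι] {T : E →ₗ[ℝ] E} (b : OrthonormalBasis ι ℝ E) {l : ι → ℝ}

lemma inner_sum_smul_apply_of_eigenbasis (hb : ∀ i, T (b i) = l i • b i) (w : ι → ℝ) :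
    ⟪∑ i, w i • b i, T (∑ i, w i • b i)⟫ = ∑ i, l i * w i ^ 2 := by
  have hT : T (∑ i, w i • b i) = ∑ i, (w i * l i) • b i := by
    simp only [map_sum, map_smul, hb, smul_smul]
  rw [hT, b.orthonormal.inner_sum]
  exact Finset.sum_congr rfl fun i _ ↦ by simp; ring

lemma trace_sq_of_eigenbasis (hb : ∀ i, T (b i) = l i • b i) :
    LinearMap.trace ℝ E (T ^ 2) = ∑ i, l i ^ 2 := by
  rw [LinearMap.trace_eq_sum_inner _ b]
  refine Finset.sum_congr rfl fun i _ ↦ ?_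
  simp [sq, hb, inner_smul_right]

end Eigenbasis

variable [MeasurableSpace E] [BorelSpace E] [FiniteDimensional ℝ E]

theorem variance_inner_apply_stdGaussian {T : E →ₗ[ℝ] E} (hT : T.IsSymmetric) :
    Var[fun x ↦ ⟪x, T x⟫; stdGaussian E] = 2 * LinearMap.trace ℝ E (T ^ 2) := by
  let b := hT.eigenvectorBasis rfl
  have hb (i) : T (b i) = hT.eigenvalues rfl i • b i := hT.apply_eigenvectorBasis rfl i
  have hcont : Continuous fun x ↦ ⟪x, T x⟫ :=
    continuous_id.inner T.continuous_of_finiteDimensional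
  rw [stdGaussian_eq_map_pi_orthonormalBasis b, variance_map hcont.aemeasurable
    (Measurable.aemeasurable (by fun_prop))]
  simp only [Function.comp_def, inner_sum_smul_apply_of_eigenbasis b hb,
    variance_sum_mul_sq_pi_gaussianReal, trace_sq_of_eigenbasis b hb, NNReal.coe_one, mul_one]

end InnerProductSpace

section Matrix

variable {ι κ : Type*} [Fintype ι]

lemma measurePreserving_toLp_stdGaussian :
    MeasurePreserving (WithLp.toLp 2) (Measure.pi fun _ : ι ↦ gaussianReal 0 1)
      (stdGaussian (EuclideanSpace ℝ ι)) :=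
  ⟨by fun_prop, map_pi_eq_stdGaussian⟩

lemma inner_toLp_toEuclideanLin [DecidableEq ι] (A : Matrix ι ι ℝ) (w : ι → ℝ) :
    ⟪WithLp.toLp 2 w, A.toEuclideanLin (WithLp.toLp 2 w)⟫ = w ⬝ᵥ A *ᵥ w := by
  simp [EuclideanSpace.inner_eq_star_dotProduct, dotProduct_comm]

lemma memLp_dotProduct_mulVec_pi_gaussianReal (A : Matrix ι ι ℝ) {p : ℝ≥0∞} (hp : p ≠ ∞) :
    MemLp (fun w ↦ w ⬝ᵥ A *ᵥ w) p (Measure.pi fun _ : ι ↦ gaussianReal 0 1) := by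
  classical
  have hE := (memLp_inner_apply_of_isGaussian _ A.toEuclideanLin.toContinuousLinearMap
    hp).comp_measurePreserving measurePreserving_toLp_stdGaussian
  simpa only [Function.comp_def, LinearMap.coe_toContinuousLinearMap',
    inner_toLp_toEuclideanLin] using hE

theorem variance_dotProduct_mulVec_pi_gaussianReal [DecidableEq ι] {A : Matrix ι ι ℝ}
    (hA : A.IsHermitian) :
    Var[fun w ↦ w ⬝ᵥ A *ᵥ w; Measure.pi fun _ : ι ↦ gaussianReal 0 1] = 2 * trace (A ^ 2) := by
  have hcont : Continuous fun x ↦ ⟪x, A.toEuclideanLin x⟫ :=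
    continuous_id.inner A.toEuclideanLin.continuous_of_finiteDimensional
  have htrace : LinearMap.trace ℝ _ (A.toEuclideanLin ^ 2) = trace (A ^ 2) := by
    rw [← toLpLin_pow, toLpLin_eq_toLin, trace_toLin_eq]
  have hvar := measurePreserving_toLp_stdGaussian.variance_fun_comp hcont.aemeasurable
  simp only [inner_toLp_toEuclideanLin] at hvar
  rw [hvar, variance_inner_apply_stdGaussian (isSymmetric_toEuclideanLin_iff.2 hA), htrace]

lemma mulVec_dotProduct_mulVec_mulVec [Fintype κ] {R : Type*} [CommSemiring R]
    (P : Matrix κ ι R) (A : Matrix κ κ R) (w : ι → R) :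
    (P *ᵥ w) ⬝ᵥ (A *ᵥ (P *ᵥ w)) = w ⬝ᵥ (Pᵀ * A * P) *ᵥ w := by
  rw [← mulVec_mulVec, ← mulVec_mulVec, dotProduct_mulVec w, vecMul_transpose]

lemma trace_one_sub_mul_sq_comm [DecidableEq ι] {R : Type*} [CommRing R] (A B : Matrix ι ι R) :
    trace ((1 - A * B) ^ 2) = trace ((1 - B * A) ^ 2) := by
  have hexpand (X : Matrix ι ι R) : (1 - X) ^ 2 = 1 - X - X + X * X := by noncomm_ring
  have hsq : trace (A * B * (A * B)) = trace (B * A * (B * A)) := by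
    rw [Matrix.mul_assoc, trace_mul_comm, ← Matrix.mul_assoc, ← Matrix.mul_assoc]
  simp only [hexpand, trace_add, trace_sub, trace_mul_comm A B, hsq]

lemma inv_diagonal_of_ne_zero [DecidableEq ι] {K : Type*} [Field K] {v : ι → K}
    (hv : ∀ i, v i ≠ 0) : (diagonal v)⁻¹ = diagonal fun i ↦ (v i)⁻¹ :=
  inv_eq_right_inv <| by
    simp only [diagonal_mul_diagonal, mul_inv_cancel₀ (hv _), diagonal_one]

lemma diagonal_sqrt_mul_inv_mul_diagonal_sqrt [DecidableEq ι] {d : ι → ℝ} (hd : ∀ i, 0 < d i) :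
    (diagonal fun i ↦ √(d i)) * (diagonal d)⁻¹ * (diagonal fun i ↦ √(d i)) = 1 := by
  simp only [inv_diagonal_of_ne_zero fun i ↦ (hd i).ne', diagonal_mul_diagonal,
    mul_right_comm _ _ (√_), Real.mul_self_sqrt (hd _).le, mul_inv_cancel₀ (hd _).ne',
    diagonal_one]

lemma diagonal_rpow_neg_half_mul_sqrt_mul_self [DecidableEq ι] {c d : ι → ℝ}
    (hc : ∀ i, 0 < c i) (hd : ∀ i, 0 ≤ d i) :
    (diagonal fun i ↦ c i ^ (-(1 : ℝ) / 2) * √(d i)) *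
        (diagonal fun i ↦ c i ^ (-(1 : ℝ) / 2) * √(d i)) =
      (diagonal c)⁻¹ * diagonal d := by
  have hc_half (i : ι) : c i ^ (-(1 : ℝ) / 2) * c i ^ (-(1 : ℝ) / 2) = (c i)⁻¹ := by
    rw [← Real.rpow_add (hc i), ← Real.rpow_neg_one]
    norm_num
  simp only [inv_diagonal_of_ne_zero fun i ↦ (hc i).ne', diagonal_mul_diagonal,
    mul_mul_mul_comm _ (√_), hc_half, Real.mul_self_sqrt (hd _)]

lemma transpose_mul_conj_mul_of_mul_transpose_eq_one [Fintype κ] [DecidableEq ι] {R : Type*}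
    [CommSemiring R] {F : Matrix ι κ R} (hF : F * Fᵀ = 1) (P X : Matrix ι ι R) :
    (Fᵀ * P)ᵀ * (Fᵀ * X * F) * (Fᵀ * P) = Pᵀ * X * P := by
  calc (Fᵀ * P)ᵀ * (Fᵀ * X * F) * (Fᵀ * P) = Pᵀ * (F * Fᵀ) * X * (F * Fᵀ) * P := by
        simp only [transpose_mul, transpose_transpose, Matrix.mul_assoc]
    _ = Pᵀ * X * P := by simp only [hF, Matrix.mul_one]

end Matrix

theorem statement13_general {ι κ : Type*} [Fintype ι] [DecidableEq ι] [Fintype κ]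
    {F : Matrix ι κ ℝ} (hF : F * Fᵀ = 1) {c d : ι → ℝ} (hc : ∀ i, 0 < c i) (hd : ∀ i, 0 < d i)
    {Q : Matrix κ κ ℝ} (hQ : Q.IsHermitian) :
    let C : Matrix ι ι ℝ := diagonal c
    let D : Matrix ι ι ℝ := diagonal d
    let Cmhalf : Matrix ι ι ℝ := diagonal fun i ↦ c i ^ (-(1 : ℝ) / 2)
    let Dhalf : Matrix ι ι ℝ := diagonal fun i ↦ √(d i)
    let B : (κ → ℝ) → ℝ := fun z ↦
      z ⬝ᵥ (Fᵀ * D⁻¹ * F) *ᵥ z - z ⬝ᵥ (Fᵀ * Cmhalf * F * Q * Fᵀ * Cmhalf * F) *ᵥ z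
    let γ : Measure (ι → ℝ) := Measure.pi fun _ ↦ gaussianReal 0 1
    MemLp (fun w ↦ B ((Fᵀ * Dhalf) *ᵥ w)) 2 γ ∧
      Var[fun w ↦ B ((Fᵀ * Dhalf) *ᵥ w); γ] = 2 * trace ((1 - F * Q * Fᵀ * (C⁻¹ * D)) ^ 2) := by
  intro C D Cmhalf Dhalf B γ
  let M : Matrix ι ι ℝ := F * Q * Fᵀ
  let E : Matrix ι ι ℝ := diagonal fun i ↦ c i ^ (-(1 : ℝ) / 2) * √(d i)
  have hC_half : Cmhalf * Dhalf = E := diagonal_mul_diagonal _ _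
  have hC_half' : Dhalf * Cmhalf = E := (Matrix.commute_diagonal _ _).eq.trans hC_half
  have hE_sq : E * E = C⁻¹ * D :=
    diagonal_rpow_neg_half_mul_sqrt_mul_self hc fun i ↦ (hd i).le
  have hD_half : Dhalf * D⁻¹ * Dhalf = 1 := diagonal_sqrt_mul_inv_mul_diagonal_sqrt hd
  have hconj : Dhalf * (Cmhalf * M * Cmhalf) * Dhalf = E * (M * E) := by
    calc _ = Dhalf * Cmhalf * (M * (Cmhalf * Dhalf)) := by simp only [Matrix.mul_assoc]
      _ = E * (M * E) := by rw [hC_half, hC_half']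
  have hB (w : ι → ℝ) : B ((Fᵀ * Dhalf) *ᵥ w) = w ⬝ᵥ (1 - E * (M * E)) *ᵥ w := by
    have hmid : Fᵀ * Cmhalf * F * Q * Fᵀ * Cmhalf * F = Fᵀ * (Cmhalf * M * Cmhalf) * F := by
      simp only [M, Matrix.mul_assoc]
    have hDhalf : Dhalfᵀ = Dhalf := diagonal_transpose _
    simp only [B, mulVec_dotProduct_mulVec_mulVec, hmid, hDhalf, hD_half, hconj, sub_mulVec,
      transpose_mul_conj_mul_of_mul_transpose_eq_one hF, dotProduct_sub]
  have hM : M.IsHermitian := isHermitian_mul_mul_conjTranspose F hQ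
  have hA : (1 - E * (M * E)).IsHermitian := by
    rw [← Matrix.mul_assoc]
    exact isHermitian_one.sub <| by
      simpa [E] using! isHermitian_mul_mul_conjTranspose E hM
  simp only [hB]
  refine ⟨memLp_dotProduct_mulVec_pi_gaussianReal _ (by simp), ?_⟩
  rw [variance_dotProduct_mulVec_pi_gaussianReal hA, trace_one_sub_mul_sq_comm, Matrix.mul_assoc,
    hE_sq]

/-- variance of the log-likelihood-ratio quadratic form `B(Z)` under the
Whittle (Gaussian) approximation `Z = Fᵀ D^{1/2} W` with `W` i.i.d. standard normal. -/
theorem statement13 (n : ℕ) (hn : 1 ≤ n) (F : Matrix (Fin n) (Fin n) ℝ)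
    (hF1 : F * Fᵀ = 1) (hF2 : Fᵀ * F = 1)
    (c d : Fin n → ℝ) (hc : ∀ i, 0 < c i) (hd : ∀ i, 0 < d i)
    (S : Matrix (Fin n) (Fin n) ℝ) (hS : S.PosDef) :
    let C : Matrix (Fin n) (Fin n) ℝ := Matrix.diagonal c
    let D : Matrix (Fin n) (Fin n) ℝ := Matrix.diagonal d
    let Cmhalf : Matrix (Fin n) (Fin n) ℝ := Matrix.diagonal fun i => c i ^ (-(1 : ℝ) / 2)
    let Dhalf : Matrix (Fin n) (Fin n) ℝ := Matrix.diagonal fun i => Real.sqrt (d i)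
    let B : (Fin n → ℝ) → ℝ := fun z =>
      z ⬝ᵥ (Fᵀ * D⁻¹ * F).mulVec z -
        z ⬝ᵥ (Fᵀ * Cmhalf * F * S⁻¹ * Fᵀ * Cmhalf * F).mulVec z
    (∫ w, B ((Fᵀ * Dhalf).mulVec w) ^ 2
        ∂(Measure.pi fun _ : Fin n => gaussianReal 0 1)) -
      (∫ w, B ((Fᵀ * Dhalf).mulVec w)
          ∂(Measure.pi fun _ : Fin n => gaussianReal 0 1)) ^ 2 =
    2 * Matrix.trace ((1 - F * S⁻¹ * Fᵀ * (C⁻¹ * D)) ^ 2) := by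
  intro C D Cmhalf Dhalf B
  obtain ⟨hB, hvar⟩ := statement13_general hF1 hc hd hS.isHermitian.inv
  exact (variance_eq_sub hB).symm.trans hvar
end
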